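/- Suppose ρ = |ψ⟩⟨ψ| is a pure state. Then for every integer n ≥ 1, Tr(T_AB^n) = Tr(T_ĀB̄^n); in particular the nonzero spectra of T_AB and T_ĀB̄ coincide with multiplicities. -/

import Mathlib

open Matrix
open scoped Kronecker ComplexOrder ENNReal

theorem trace_pow_mul_comm_aux {m n : Type*} [Fintype m] [Fintype n] [DecidableEq m]
    [DecidableEq n] (X : Matrix m n ℂ) (Y : Matrix n m ℂ) (k : ℕ) :
    ((X * Y) ^ (k + 1)).trace = ((Y * X) ^ (k + 1)).trace := by
  have h : ∀ k : ℕ, (X * Y) ^ k * X = X * (Y * X) ^ k := by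
    intro k
    induction k with
    | zero => simp
    | succ k ih =>
      rw [pow_succ', Matrix.mul_assoc, ih, pow_succ' (Y * X)]
      simp only [Matrix.mul_assoc]
  rw [pow_succ, ← Matrix.mul_assoc, h, Matrix.mul_assoc, Matrix.trace_mul_comm, pow_succ,
    Matrix.mul_assoc]

theorem trace_pure_aux {m n : Type*} [Fintype m] [Fintype n]
    (ψ : m → ℂ) (U : Matrix n m ℂ) (X : Matrix m m ℂ) (Y : Matrix n n ℂ) :
    (Matrix.vecMulVec ψ (star ψ) * X * Uᴴ * Y * U).trace
      = ∑ p, ∑ q, ∑ r, ∑ s, star (ψ p) * X p q * star (U r q) * Y r s * (U *ᵥ ψ) s := by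
  have : Matrix.vecMulVec ψ (star ψ) * X * Uᴴ * Y * U
      = Matrix.vecMulVec ψ (star ψ ᵥ* (X * Uᴴ * Y * U)) := by
    rw [← Matrix.vecMulVec_mul]; simp only [Matrix.mul_assoc]
  rw [this, Matrix.trace_vecMulVec, dotProduct_comm, ← Matrix.dotProduct_mulVec,
    ← Matrix.mulVec_mulVec, ← Matrix.mulVec_mulVec, ← Matrix.mulVec_mulVec]
  simp only [dotProduct, Matrix.mulVec, Finset.mul_sum, Pi.star_apply,
    Matrix.conjTranspose_apply, mul_assoc]

/-- For a pure state `ρ = |ψ⟩⟨ψ|`, all moments of `T_AB` and `T_ĀB̄` agree: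
`Tr (T_AB ^ n) = Tr (T_ĀB̄ ^ n)` for every `n ≥ 1`. -/
theorem spacetime_density_matrix_pure_state_complement_moments
    {A A' B B' : Type*} [Fintype A] [Fintype A'] [Fintype B] [Fintype B']
    [DecidableEq A] [DecidableEq A'] [DecidableEq B] [DecidableEq B']
    (ψ : A × A' → ℂ) (hψ : star ψ ⬝ᵥ ψ = 1)
    (ρ : Matrix (A × A') (A × A') ℂ) (hρ : ρ = Matrix.vecMulVec ψ (star ψ))
    (U : Matrix (B × B') (A × A') ℂ) (hU : Uᴴ * U = 1) (hU' : U * Uᴴ = 1)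
    (T : Matrix (A × B) (A × B) ℂ)
    (hT : ∀ (OA : Matrix A A ℂ) (OB : Matrix B B ℂ),
      (T * (OA ⊗ₖ OB)).trace
        = (ρ * (OA ⊗ₖ (1 : Matrix A' A' ℂ)) * Uᴴ
            * (OB ⊗ₖ (1 : Matrix B' B' ℂ)) * U).trace)
    (T'' : Matrix (A' × B') (A' × B') ℂ)
    (hT'' : ∀ (O : Matrix A' A' ℂ) (O' : Matrix B' B' ℂ),
      (T'' * (O ⊗ₖ O')).trace
        = (ρ * ((1 : Matrix A A ℂ) ⊗ₖ O) * Uᴴ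
            * ((1 : Matrix B B ℂ) ⊗ₖ O') * U).trace) :
    ∀ n : ℕ, 1 ≤ n → (T ^ n).trace = (T'' ^ n).trace := by
  intro n hn
  obtain ⟨k, rfl⟩ : ∃ k, n = k + 1 := ⟨n - 1, by omega⟩
  subst hρ
  obtain ⟨φ, hφ⟩ : ∃ φ : Matrix B B' ℂ, ∀ b b', φ b b' = (U *ᵥ ψ) (b, b') :=
    ⟨fun b b' => (U *ᵥ ψ) (b, b'), fun _ _ => rfl⟩
  obtain ⟨χ, hχ⟩ : ∃ χ : Matrix A' A ℂ, ∀ a' a, χ a' a = star (ψ (a, a')) :=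
    ⟨fun a' a => star (ψ (a, a')), fun _ _ => rfl⟩
  obtain ⟨V, hV⟩ : ∃ V : Matrix (A × B') (A' × B) ℂ,
      ∀ a b' a' b, V (a, b') (a', b) = star (U (b, b') (a, a')) :=
    ⟨fun x y => star (U (y.2, x.2) (x.1, y.1)), fun _ _ _ _ => rfl⟩
  have h1 : T = ((1 : Matrix A A ℂ) ⊗ₖ φ) * (V * (χ ⊗ₖ (1 : Matrix B B ℂ))) := by
    ext ⟨a, b⟩ ⟨a2, b2⟩
    have h := hT (Matrix.single a2 a 1) (Matrix.single b2 b 1)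
    rw [trace_pure_aux, Matrix.single_kronecker_single, Matrix.trace_mul_single] at h
    simp only [MulOpposite.op_one, one_smul, mul_one] at h
    rw [h]
    simp [Matrix.mul_apply, Fintype.sum_prod_type, Matrix.single_apply, Matrix.one_apply,
      hφ, hχ, hV, ite_and, Finset.mul_sum]
    rw [Finset.sum_comm]
    exact Finset.sum_congr rfl fun _ _ => Finset.sum_congr rfl fun _ _ => by ring
  have h2 : T''ᵀ = ((χ ⊗ₖ (1 : Matrix B' B' ℂ)) * V) * ((1 : Matrix A' A' ℂ) ⊗ₖ φ) := by
    ext ⟨a2, b2⟩ ⟨a, b⟩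
    have h := hT'' (Matrix.single a2 a 1) (Matrix.single b2 b 1)
    rw [trace_pure_aux, Matrix.single_kronecker_single, Matrix.trace_mul_single] at h
    simp only [MulOpposite.op_one, one_smul, mul_one] at h
    rw [Matrix.transpose_apply, h]
    simp [Matrix.mul_apply, Fintype.sum_prod_type, Matrix.single_apply, Matrix.one_apply,
      hφ, hχ, hV, ite_and, Finset.mul_sum, Finset.sum_mul]
    rw [Finset.sum_comm]
  rw [← Matrix.trace_transpose (T'' ^ (k + 1)), Matrix.transpose_pow, h1, h2,
    trace_pow_mul_comm_aux, Matrix.mul_assoc (χ ⊗ₖ (1 : Matrix B' B' ℂ)),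
    trace_pow_mul_comm_aux (χ ⊗ₖ (1 : Matrix B' B' ℂ))]
  simp only [Matrix.mul_assoc, ← Matrix.mul_kronecker_mul, Matrix.one_mul, Matrix.mul_one]
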